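/- Assume ζ₀ := ū^{in}/u_s > 1, let (u₀, E₀) ∈ T_acc with 0 < u₀ < u_s, and let (ū₁, Ē) : [0, l_max] → ℝ² be a smooth solution of the system (ū₁^{γ+1} − u_s^{γ+1})·ū₁' = Ē·ū₁^γ, Ē' = J/ū₁ − ρ̄^{in} with (ū₁, Ē)(0) = (u₀, E₀), ū₁ > 0, and ū₁' > 0 on [0, l_max). Then for all x₁ ∈ [0, l_max]: Ē(x₁) = sgn(ū₁(x₁) − u_s)·√(2H(ū₁(x₁))), where sgn(s) = 1 for s > 0, sgn(s) = −1 for s < 0, and sgn(0) = 0. -/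

import Mathlib

open Set Filter intervalIntegral

/-- The sonic speed `u_s = (γ S₀ J^{γ−1})^{1/(γ+1)}`. -/
noncomputable def usonic (γ S₀ J : ℝ) : ℝ :=
  (γ * S₀ * J ^ (γ - 1)) ^ (1 / (γ + 1))

/-- `ū^{in} = J / ρ̄^{in}`. -/
noncomputable def uIn (ρin J : ℝ) : ℝ := J / ρin

/-- `H(u) = (J/ū^{in}) ∫_{u_s}^{u} t^{−(γ+1)} (t^{γ+1} − u_s^{γ+1})(ū^{in} − t) dt`. -/
noncomputable def Hfun (γ ρin S₀ J : ℝ) (u : ℝ) : ℝ :=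
  (J / uIn ρin J) *
    ∫ t in usonic γ S₀ J..u,
      t ^ (-(γ + 1)) * ((t ^ (γ + 1) - usonic γ S₀ J ^ (γ + 1)) * (uIn ρin J - t))

/-- The critical trajectory `T = {(u,E) ∈ (0,∞) × ℝ : ½E² − H(u) = 0}`. -/
def critTraj (γ ρin S₀ J : ℝ) : Set (ℝ × ℝ) :=
  {p | 0 < p.1 ∧ p.2 ^ 2 / 2 - Hfun γ ρin S₀ J p.1 = 0}

/-- The critical trajectory with acceleration. -/
def critTrajAcc (γ ρin S₀ J : ℝ) : Set (ℝ × ℝ) :=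
  {p ∈ critTraj γ ρin S₀ J | 0 ≤ (p.1 - usonic γ S₀ J) * p.2}

/-- The critical trajectory with deceleration. -/
def critTrajDec (γ ρin S₀ J : ℝ) : Set (ℝ × ℝ) :=
  {p ∈ critTraj γ ρin S₀ J | (p.1 - usonic γ S₀ J) * p.2 ≤ 0}

/-!
The energy `E² / 2 - H(u)` is a first integral: along a solution the two equations give `E² / 2` and
`H(u)` the same derivative. A solution that starts on the critical trajectory therefore stays on it,
i.e. `|E| = √(2 H(u))`. Since `u ^ (γ + 1) - u_s ^ (γ + 1)` has the sign of `u - u_s`, the momentum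
equation shows that `E` has this sign wherever `0 ≤ u'`. At the sonic speed `E = 0`, because
`H(u_s) = 0`.
-/

theorem derivWithin_nonneg_of_nonneg_on_interior {D : Set ℝ} (hD : Convex ℝ D) {f : ℝ → ℝ}
    (hf : DifferentiableOn ℝ f D) (hf' : ∀ x ∈ interior D, 0 ≤ derivWithin f D x) (x : ℝ) :
    0 ≤ derivWithin f D x := by
  have hmono : MonotoneOn f D :=
    monotoneOn_of_deriv_nonneg hD hf.continuousOn (hf.mono interior_subset) fun y hy => by
      rw [← derivWithin_of_mem_nhds (mem_interior_iff_mem_nhds.1 hy)]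
      exact hf' y hy
  exact hmono.derivWithin_nonneg

theorem sub_mul_rpow_sub_rpow_nonneg {a b p : ℝ} (ha : 0 ≤ a) (hb : 0 ≤ b) (hp : 0 ≤ p) :
    0 ≤ (a - b) * (a ^ p - b ^ p) :=
  (monotoneOn_id.monovaryOn (Real.monotoneOn_rpow_Ici_of_exponent_nonneg hp)).sub_mul_sub_nonneg
    hb ha

theorem real_sign_mul_abs_of_mul_nonneg {a e : ℝ} (h : 0 ≤ a * e) (he : a = 0 → e = 0) :
    Real.sign a * |e| = e := by
  rcases lt_trichotomy a 0 with ha | ha | ha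
  · rw [Real.sign_of_neg ha, abs_of_nonpos (nonpos_of_mul_nonneg_right h ha), neg_one_mul, neg_neg]
  · rw [he ha, abs_zero, mul_zero]
  · rw [Real.sign_of_pos ha, abs_of_nonneg (nonneg_of_mul_nonneg_right h ha), one_mul]

section CriticalTrajectory

variable {γ ρin S₀ J : ℝ}

theorem usonic_pos (hγ : 0 < γ) (hS₀ : 0 < S₀) (hJ : 0 < J) : 0 < usonic γ S₀ J := by
  unfold usonic
  positivity

theorem Hfun_usonic : Hfun γ ρin S₀ J (usonic γ S₀ J) = 0 := by
  rw [Hfun, intervalIntegral.integral_same, mul_zero]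

theorem hasDerivAt_Hfun (hs : 0 < usonic γ S₀ J) (hJ : J ≠ 0) {v : ℝ} (hv : 0 < v) :
    HasDerivAt (Hfun γ ρin S₀ J)
      (ρin * (v ^ (-(γ + 1)) * ((v ^ (γ + 1) - usonic γ S₀ J ^ (γ + 1)) * (uIn ρin J - v)))) v := by
  have hrpow (p : ℝ) : ContinuousOn (fun t : ℝ => t ^ p) (Ioi 0) :=
    continuousOn_id.rpow_const fun t ht => Or.inl (ne_of_gt ht)
  have hcont : ContinuousOn (fun t : ℝ => t ^ (-(γ + 1)) *
      ((t ^ (γ + 1) - usonic γ S₀ J ^ (γ + 1)) * (uIn ρin J - t))) (Ioi 0) :=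
    (hrpow _).mul (((hrpow _).sub continuousOn_const).mul (continuousOn_const.sub continuousOn_id))
  have hsub : uIcc (usonic γ S₀ J) v ⊆ Ioi 0 := fun t ht => (lt_min hs hv).trans_le ht.1
  have hρ : J / uIn ρin J = ρin := div_div_cancel₀ hJ
  have hint := integral_hasDerivAt_right (hcont.mono hsub).intervalIntegrable
    (hcont.stronglyMeasurableAtFilter isOpen_Ioi v hv)
    (hcont.continuousAt (isOpen_Ioi.mem_nhds hv))
  exact (hint.const_mul (J / uIn ρin J)).congr_deriv (by rw [hρ])

theorem sq_eq_two_mul_Hfun_of_mem_critTraj {v e : ℝ} (h : (v, e) ∈ critTraj γ ρin S₀ J) :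
    e ^ 2 = 2 * Hfun γ ρin S₀ J v := by
  linarith [h.2]

theorem eq_sign_mul_sqrt_of_mem_critTrajAcc {v e : ℝ} (h : (v, e) ∈ critTrajAcc γ ρin S₀ J) :
    e = Real.sign (v - usonic γ S₀ J) * √(2 * Hfun γ ρin S₀ J v) := by
  have hsq := sq_eq_two_mul_Hfun_of_mem_critTraj h.1
  have hsonic : v - usonic γ S₀ J = 0 → e = 0 := fun hv => by
    rw [sub_eq_zero.1 hv, Hfun_usonic, mul_zero] at hsq
    exact pow_eq_zero_iff two_ne_zero |>.1 hsq
  rw [← hsq, Real.sqrt_sq_eq_abs, real_sign_mul_abs_of_mul_nonneg h.2 hsonic]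

end CriticalTrajectory

/-- `(u, E)` is a differentiable solution on `s` of the one-dimensional steady Euler–Poisson system
with positive speed `u`. The derivative of `u` is the parameter `u'` rather than `derivWithin u s`,
so that no junk value enters the momentum equation. -/
structure IsSteadyEulerPoissonOn (γ ρin S₀ J : ℝ) (u u' E : ℝ → ℝ) (s : Set ℝ) : Prop where
  pos : ∀ x ∈ s, 0 < u x
  hasDerivWithinAt_speed : ∀ x ∈ s, HasDerivWithinAt u (u' x) s x
  hasDerivWithinAt_field : ∀ x ∈ s, HasDerivWithinAt E (J / u x - ρin) s x
  momentum : ∀ x ∈ s, (u x ^ (γ + 1) - usonic γ S₀ J ^ (γ + 1)) * u' x = E x * u x ^ γ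

namespace IsSteadyEulerPoissonOn

variable {γ ρin S₀ J : ℝ} {u u' E : ℝ → ℝ} {s : Set ℝ} {x : ℝ}

theorem of_derivWithin (hpos : ∀ x ∈ s, 0 < u x) (hu : DifferentiableOn ℝ u s)
    (hE : DifferentiableOn ℝ E s)
    (hODE : ∀ x ∈ s,
      (u x ^ (γ + 1) - usonic γ S₀ J ^ (γ + 1)) * derivWithin u s x = E x * u x ^ γ ∧
        derivWithin E s x = J / u x - ρin) :
    IsSteadyEulerPoissonOn γ ρin S₀ J u (derivWithin u s) E s where
  pos := hpos
  hasDerivWithinAt_speed x hx := (hu x hx).hasDerivWithinAt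
  hasDerivWithinAt_field x hx := (hODE x hx).2 ▸ (hE x hx).hasDerivWithinAt
  momentum x hx := (hODE x hx).1

theorem hasDerivWithinAt_energy (h : IsSteadyEulerPoissonOn γ ρin S₀ J u u' E s)
    (hs : 0 < usonic γ S₀ J) (hJ : J ≠ 0) (hρin : ρin ≠ 0) (hx : x ∈ s) :
    HasDerivWithinAt (fun y => E y ^ 2 / 2 - Hfun γ ρin S₀ J (u y)) 0 s x := by
  have hux := h.pos x hx
  have hH := (hasDerivAt_Hfun (ρin := ρin) hs hJ hux).comp_hasDerivWithinAt x
    (h.hasDerivWithinAt_speed x hx)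
  have hE := ((h.hasDerivWithinAt_field x hx).pow 2).div_const 2
  have hrpow : u x ^ (-(γ + 1)) * u x ^ γ = (u x)⁻¹ := by
    rw [← Real.rpow_add hux, ← Real.rpow_neg_one]
    congr 1
    ring
  have hbalance : ρin * (u x ^ (-(γ + 1)) * ((u x ^ (γ + 1) - usonic γ S₀ J ^ (γ + 1)) *
      (uIn ρin J - u x))) * u' x = E x * (J / u x - ρin) :=
    calc
      _ = ρin * u x ^ (-(γ + 1)) * ((u x ^ (γ + 1) - usonic γ S₀ J ^ (γ + 1)) * u' x) *
          (uIn ρin J - u x) := by ring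
      _ = ρin * (u x ^ (-(γ + 1)) * u x ^ γ) * E x * (uIn ρin J - u x) := by
        rw [h.momentum x hx]
        ring
      _ = E x * (J / u x - ρin) := by
        rw [hrpow, uIn]
        field_simp
  refine (hE.sub hH).congr_deriv ?_
  rw [hbalance]
  norm_num
  ring

theorem mem_critTraj (h : IsSteadyEulerPoissonOn γ ρin S₀ J u u' E s) (hs : 0 < usonic γ S₀ J)
    (hJ : J ≠ 0) (hρin : ρin ≠ 0) (hconv : Convex ℝ s) {x₀ : ℝ} (hx₀ : x₀ ∈ s)
    (hinit : (u x₀, E x₀) ∈ critTraj γ ρin S₀ J) (hx : x ∈ s) :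
    (u x, E x) ∈ critTraj γ ρin S₀ J := by
  have hconst := hconv.norm_image_sub_le_of_norm_hasDerivWithin_le (C := 0)
    (fun y hy => h.hasDerivWithinAt_energy hs hJ hρin hy) (fun y _ => norm_zero.le) hx₀ hx
  rw [zero_mul, norm_le_zero_iff, sub_eq_zero] at hconst
  exact ⟨h.pos x hx, hconst.trans hinit.2⟩

theorem sub_usonic_mul_field_nonneg (h : IsSteadyEulerPoissonOn γ ρin S₀ J u u' E s)
    (hs : 0 ≤ usonic γ S₀ J) (hγ : 0 ≤ γ + 1) (hx : x ∈ s) (hacc : 0 ≤ u' x) :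
    0 ≤ (u x - usonic γ S₀ J) * E x := by
  have hux := h.pos x hx
  refine nonneg_of_mul_nonneg_left ?_ (Real.rpow_pos_of_pos hux γ)
  rw [mul_assoc, ← h.momentum x hx, ← mul_assoc]
  exact mul_nonneg (sub_mul_rpow_sub_rpow_nonneg hux.le hs hγ) hacc

end IsSteadyEulerPoissonOn

theorem stmt8_general {γ ρin S₀ J : ℝ} (hγ : 0 < γ) (hρin : ρin ≠ 0) (hS₀ : 0 < S₀) (hJ : 0 < J)
    {u u' E : ℝ → ℝ} {s : Set ℝ} (h : IsSteadyEulerPoissonOn γ ρin S₀ J u u' E s)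
    (hconv : Convex ℝ s) {x₀ : ℝ} (hx₀ : x₀ ∈ s) (hinit : (u x₀, E x₀) ∈ critTraj γ ρin S₀ J)
    {x : ℝ} (hx : x ∈ s) (hacc : 0 ≤ u' x) :
    E x = Real.sign (u x - usonic γ S₀ J) * √(2 * Hfun γ ρin S₀ J (u x)) := by
  have hs := usonic_pos hγ hS₀ hJ
  exact eq_sign_mul_sqrt_of_mem_critTrajAcc
    ⟨h.mem_critTraj hs hJ.ne' hρin hconv hx₀ hinit hx,
      h.sub_usonic_mul_field_nonneg hs.le (add_pos hγ one_pos).le hx hacc⟩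

/-- Along the accelerating smooth transonic solution, the electric field is recovered from
the speed via `Ē = sgn(ū₁ − u_s) √(2H(ū₁))`. -/
theorem stmt8
    (γ ρin S₀ J u₀ E₀ lmax : ℝ)
    (hγ : 1 < γ) (hρin : 0 < ρin) (hS₀ : 0 < S₀) (hJ : 0 < J)
    (hζ₀ : 1 < uIn ρin J / usonic γ S₀ J)
    (hinit : (u₀, E₀) ∈ critTrajAcc γ ρin S₀ J)
    (hu₀ : 0 < u₀) (hu₀s : u₀ < usonic γ S₀ J)
    (hlmax : 0 < lmax)
    (u E : ℝ → ℝ)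
    (husm : ContDiffOn ℝ (⊤ : ℕ∞) u (Icc 0 lmax)) (hEsm : ContDiffOn ℝ (⊤ : ℕ∞) E (Icc 0 lmax))
    (hupos : ∀ x ∈ Icc (0:ℝ) lmax, 0 < u x)
    (hu0 : u 0 = u₀) (hE0 : E 0 = E₀)
    (hODE : ∀ x ∈ Icc (0:ℝ) lmax,
      (u x ^ (γ + 1) - usonic γ S₀ J ^ (γ + 1)) * derivWithin u (Icc 0 lmax) x
        = E x * u x ^ γ ∧
      derivWithin E (Icc 0 lmax) x = J / u x - ρin)
    (hacc : ∀ x ∈ Ico (0:ℝ) lmax, 0 < derivWithin u (Icc 0 lmax) x)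
    :
    ∀ x ∈ Icc (0:ℝ) lmax,
      E x = Real.sign (u x - usonic γ S₀ J) * Real.sqrt (2 * Hfun γ ρin S₀ J (u x)) := by
  have hu := husm.differentiableOn (by simp)
  have hsol := IsSteadyEulerPoissonOn.of_derivWithin hupos hu (hEsm.differentiableOn (by simp)) hODE
  have hu'_nonneg := derivWithin_nonneg_of_nonneg_on_interior (convex_Icc 0 lmax) hu fun x hx =>
    (hacc x (Ioo_subset_Ico_self (interior_Icc.subset hx))).le
  subst hu0 hE0
  exact fun x hx => stmt8_general (one_pos.trans hγ) hρin.ne' hS₀ hJ hsol (convex_Icc 0 lmax)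
    (left_mem_Icc.2 hlmax.le) hinit.1 hx (hu'_nonneg x)
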